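/- Let (X_t)_{t∈ℝ} be an ℝ^n-valued process and ψ : [0,∞) → [0,∞) a function. Suppose that for every m ≥ 0 there is an ℝ^n-valued family (X_t^{(m)})_{t∈ℝ} on the same probability space such that (i) E‖X_t − X_t^{(m)}‖ ≤ ψ(m) for all t ∈ ℝ, and (ii) for all u,v ∈ ℕ* and all real indices i_1 ≤ … ≤ i_u and j_1 ≤ … ≤ j_v with j_1 − i_u ≥ m, the random vectors (X_{i_1},…,X_{i_u}) and (X^{(m)}_{j_1},…,X^{(m)}_{j_v}) are independent. Then for all u,v ∈ ℕ*, all r ≥ 0, all real indices i_1 ≤ … ≤ i_u ≤ i_u + r ≤ j_1 ≤ … ≤ j_v, all bounded measurable F : (ℝ^n)^u → ℝ with ‖F‖_∞ ≤ 1, and all Lipschitz G : (ℝ^n)^v → ℝ with ‖G‖_∞ ≤ 1, one has |Cov(F(X_{i_1},…,X_{i_u}), G(X_{j_1},…,X_{j_v}))| ≤ 2 v Lip(G) ψ(r). Consequently, if ψ(m) → 0 as m → ∞, the process X is θ-weakly dependent with coefficients θ(r) = ψ(r) and constant 2. -/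

import Mathlib

open MeasureTheory ProbabilityTheory Filter

noncomputable section

/-- Covariance of two real-valued random variables. -/
def cov {Ω : Type*} [MeasurableSpace Ω] (μ : Measure Ω) (U V : Ω → ℝ) : ℝ :=
  (∫ ω, U ω * V ω ∂μ) - (∫ ω, U ω ∂μ) * (∫ ω, V ω ∂μ)

/-- `L` is a (nonnegative) Lipschitz bound for `F` with respect to the distance
`δ₁(x,y) = ∑ i ‖x i - y i‖` on `Eᵘ`. -/
def Delta1Lip {E : Type*} [NormedAddCommGroup E] {u : ℕ} (F : (Fin u → E) → ℝ) (L : ℝ) : Prop :=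
  0 ≤ L ∧ ∀ x y : Fin u → E, |F x - F y| ≤ L * ∑ i, ‖x i - y i‖

/-- θ-weak dependence of a process with coefficients `θ` and constant `c₀`: `θ r → 0` and the
covariance of a bounded measurable functional of the past and a Lipschitz functional of the
future, separated by a time gap `r`, is controlled by `c₀ v Lip(G) θ(r)`. -/
def ThetaWeaklyDependent {Ω : Type*} [MeasurableSpace Ω] (μ : Measure Ω)
    {E : Type*} [NormedAddCommGroup E] [MeasurableSpace E]
    (X : ℝ → Ω → E) (θ : ℝ → ℝ) (c₀ : ℝ) : Prop :=
  0 ≤ c₀ ∧ (∀ r, 0 ≤ θ r) ∧ Tendsto θ atTop (nhds 0) ∧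
    ∀ (u v : ℕ), 0 < u → 0 < v → ∀ r : ℝ, 0 ≤ r →
      ∀ (i : Fin u → ℝ) (j : Fin v → ℝ), Monotone i → Monotone j →
        (∀ a b, i a + r ≤ j b) →
        ∀ (F : (Fin u → E) → ℝ) (G : (Fin v → E) → ℝ) (LG : ℝ),
          Measurable F → Measurable G →
          (∀ x, |F x| ≤ 1) → (∀ x, |G x| ≤ 1) →
          Delta1Lip G LG →
          |cov μ (fun ω => F fun a => X (i a) ω) (fun ω => G fun b => X (j b) ω)| ≤
            c₀ * (v : ℝ) * LG * θ r

/-!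
A covariance with a functional `W` of the coupled future vanishes by independence, so
`Cov(U, V) = Cov(U, V - W)`. A variable bounded by `C` has covariance at most `2 C E|D|` with any
integrable `D`; for `D = V - W`, the Lipschitz condition bounds `E|D|` by the sum of the `v`
coordinatewise coupling errors. The constant `2` comes from the two terms `E[U D]` and `E[U] E[D]`.
-/

section Covariance

variable {Ω : Type*} [MeasurableSpace Ω] {μ : Measure Ω} {U V W : Ω → ℝ} {C : ℝ}

theorem cov_sub_right (hUV : Integrable (fun ω => U ω * V ω) μ)
    (hUW : Integrable (fun ω => U ω * W ω) μ) (hV : Integrable V μ) (hW : Integrable W μ) :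
    cov μ U (fun ω => V ω - W ω) = cov μ U V - cov μ U W := by
  simp only [cov, mul_sub, integral_sub hUV hUW, integral_sub hV hW]
  ring

theorem cov_eq_zero_of_indepFun (hUV : IndepFun U V μ) (hU : AEStronglyMeasurable U μ)
    (hV : AEStronglyMeasurable V μ) : cov μ U V = 0 :=
  sub_eq_zero.mpr (hUV.integral_fun_mul_eq_mul_integral hU hV)

theorem abs_cov_le_two_mul_integral_abs [IsProbabilityMeasure μ]
    (hUC : ∀ᵐ ω ∂μ, |U ω| ≤ C) (hV : Integrable V μ) :
    |cov μ U V| ≤ 2 * C * ∫ ω, |V ω| ∂μ := by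
  have abs_integral_mul_le : |∫ ω, U ω * V ω ∂μ| ≤ C * ∫ ω, |V ω| ∂μ := by
    rw [← Real.norm_eq_abs, ← integral_const_mul]
    refine norm_integral_le_of_norm_le (hV.abs.const_mul C) ?_
    filter_upwards [hUC] with ω hω
    rw [Real.norm_eq_abs, abs_mul]
    gcongr
  have abs_integral_le : |∫ ω, U ω ∂μ| ≤ C := by
    simpa using norm_integral_le_of_norm_le_const (f := U) hUC
  have abs_mul_integral_le : |(∫ ω, U ω ∂μ) * ∫ ω, V ω ∂μ| ≤ C * ∫ ω, |V ω| ∂μ := by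
    rw [abs_mul]
    exact mul_le_mul abs_integral_le abs_integral_le_integral_abs (abs_nonneg _)
      ((abs_nonneg _).trans abs_integral_le)
  calc |cov μ U V|
      ≤ |∫ ω, U ω * V ω ∂μ| + |(∫ ω, U ω ∂μ) * ∫ ω, V ω ∂μ| := abs_sub _ _
    _ ≤ 2 * C * ∫ ω, |V ω| ∂μ := by linarith

theorem abs_cov_le_of_indepFun [IsProbabilityMeasure μ] (hUW : IndepFun U W μ)
    (hU : AEStronglyMeasurable U μ) (hUC : ∀ᵐ ω ∂μ, |U ω| ≤ C)
    (hV : Integrable V μ) (hW : Integrable W μ) :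
    |cov μ U V| ≤ 2 * C * ∫ ω, |V ω - W ω| ∂μ := by
  have cov_eq : cov μ U V = cov μ U fun ω => V ω - W ω := by
    rw [cov_sub_right (hV.bdd_mul hU hUC) (hW.bdd_mul hU hUC) hV hW,
      cov_eq_zero_of_indepFun hUW hU hW.aestronglyMeasurable, sub_zero]
  rw [cov_eq]
  exact abs_cov_le_two_mul_integral_abs hUC (hV.sub hW)

end Covariance

section Coupling

variable {Ω : Type*} [MeasurableSpace Ω] {μ : Measure Ω} {E : Type*} [NormedAddCommGroup E]
  {v : ℕ} {Y Z : Ω → Fin v → E} {G : (Fin v → E) → ℝ} {L ε : ℝ}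

theorem Delta1Lip.integral_abs_sub_le (hG : Delta1Lip G L)
    (hint : ∀ b, Integrable (fun ω => ‖Y ω b - Z ω b‖) μ)
    (hε : ∀ b, ∫ ω, ‖Y ω b - Z ω b‖ ∂μ ≤ ε) :
    ∫ ω, |G (Y ω) - G (Z ω)| ∂μ ≤ v * L * ε := by
  obtain ⟨hL, hG⟩ := hG
  calc ∫ ω, |G (Y ω) - G (Z ω)| ∂μ
      ≤ ∫ ω, L * ∑ b, ‖Y ω b - Z ω b‖ ∂μ :=
        integral_mono_of_nonneg (ae_of_all _ fun _ => abs_nonneg _)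
          ((integrable_finsetSum _ fun b _ => hint b).const_mul L) (ae_of_all _ fun _ => hG _ _)
    _ = L * ∑ b, ∫ ω, ‖Y ω b - Z ω b‖ ∂μ := by
        rw [integral_const_mul, integral_finsetSum _ fun b _ => hint b]
    _ ≤ L * ∑ _b : Fin v, ε := by
        gcongr with b
        exact hε b
    _ = v * L * ε := by
        rw [Fin.sum_const, nsmul_eq_mul]
        ring

theorem abs_cov_comp_le_of_coupling [MeasurableSpace E] [IsProbabilityMeasure μ]
    {α : Type*} [MeasurableSpace α] {P : Ω → α} {F : α → ℝ} {B C : ℝ}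
    (hP : AEMeasurable P μ) (hY : AEMeasurable Y μ) (hZ : AEMeasurable Z μ)
    (hPZ : IndepFun P Z μ)
    (hint : ∀ b, Integrable (fun ω => ‖Y ω b - Z ω b‖) μ)
    (hε : ∀ b, ∫ ω, ‖Y ω b - Z ω b‖ ∂μ ≤ ε)
    (hF : Measurable F) (hG : Measurable G) (hFC : ∀ x, |F x| ≤ C) (hGB : ∀ x, |G x| ≤ B)
    (hGL : Delta1Lip G L) :
    |cov μ (fun ω => F (P ω)) (fun ω => G (Y ω))| ≤ 2 * C * (v * L * ε) := by
  have integrable_G {T : Ω → Fin v → E} (hT : AEMeasurable T μ) :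
      Integrable (fun ω => G (T ω)) μ :=
    .of_bound (hG.comp_aemeasurable hT).aestronglyMeasurable B (ae_of_all _ fun _ => hGB _)
  obtain ⟨ω₀⟩ := μ.nonempty_of_neZero
  have hC : 0 ≤ C := (abs_nonneg _).trans (hFC (P ω₀))
  calc |cov μ (fun ω => F (P ω)) (fun ω => G (Y ω))|
      ≤ 2 * C * ∫ ω, |G (Y ω) - G (Z ω)| ∂μ :=
        abs_cov_le_of_indepFun (hPZ.comp hF hG) (hF.comp_aemeasurable hP).aestronglyMeasurable
          (ae_of_all _ fun _ => hFC _) (integrable_G hY) (integrable_G hZ)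
    _ ≤ 2 * C * (v * L * ε) := by
        gcongr
        exact hGL.integral_abs_sub_le hint hε

end Coupling

theorem theta_weak_dependence_of_coupling_general
    {Ω : Type*} [MeasurableSpace Ω] (μ : Measure Ω) [IsProbabilityMeasure μ]
    {E : Type*} [NormedAddCommGroup E] [MeasurableSpace E]
    (X : ℝ → Ω → E)
    (hX : ∀ t, AEMeasurable (X t) μ)
    (ψ : ℝ → ℝ) (hψ0 : ∀ m, 0 ≤ ψ m)
    (Xm : ℝ → ℝ → Ω → E)
    (hXm : ∀ m t, AEMeasurable (Xm m t) μ)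
    (happrox : ∀ m, 0 ≤ m → ∀ t : ℝ,
      Integrable (fun ω => ‖X t ω - Xm m t ω‖) μ ∧
        (∫ ω, ‖X t ω - Xm m t ω‖ ∂μ) ≤ ψ m)
    (hindep : ∀ m, 0 ≤ m → ∀ (u v : ℕ), 0 < u → 0 < v →
      ∀ (i : Fin u → ℝ) (j : Fin v → ℝ), Monotone i → Monotone j →
        (∀ a b, i a + m ≤ j b) →
        IndepFun (fun ω (a : Fin u) => X (i a) ω)
          (fun ω (b : Fin v) => Xm m (j b) ω) μ) :
    (∀ (u v : ℕ), 0 < u → 0 < v → ∀ r : ℝ, 0 ≤ r →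
      ∀ (i : Fin u → ℝ) (j : Fin v → ℝ), Monotone i → Monotone j →
        (∀ a b, i a + r ≤ j b) →
        ∀ (F : (Fin u → E) → ℝ) (G : (Fin v → E) → ℝ) (LG : ℝ),
          Measurable F → Measurable G →
          (∀ x, |F x| ≤ 1) → (∀ x, |G x| ≤ 1) →
          Delta1Lip G LG →
          |cov μ (fun ω => F fun a => X (i a) ω) (fun ω => G fun b => X (j b) ω)| ≤
            2 * (v : ℝ) * LG * ψ r) ∧
      (Tendsto ψ atTop (nhds 0) →
        ThetaWeaklyDependent μ X ψ 2) := by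
  refine ⟨?bound, fun hψ => ⟨zero_le_two, hψ0, hψ, ?bound⟩⟩
  intro u v hu hv r hr i j hi hj hij F G LG hF hG hF1 hG1 hGL
  have bound := abs_cov_comp_le_of_coupling
    (aemeasurable_pi_lambda _ fun a => hX (i a)) (aemeasurable_pi_lambda _ fun b => hX (j b))
    (aemeasurable_pi_lambda _ fun b => hXm r (j b)) (hindep r hr u v hu hv i j hi hj hij)
    (fun b => (happrox r hr (j b)).1) (fun b => (happrox r hr (j b)).2) hF hG hF1 hG1 hGL
  simpa only [mul_one, mul_assoc] using bound

/-- Coupling criterion for θ-weak dependence: if for every `m ≥ 0` there is a family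
`X^(m)` that is `ψ(m)`-close to `X` in `L¹` and such that the past of `X` is independent of
the future marginals of `X^(m)` at a gap `m`, then the θ-weak dependence inequality holds with
`θ(r) = ψ(r)` and constant `2`. -/
theorem theta_weak_dependence_of_coupling
    {Ω : Type*} [MeasurableSpace Ω] (μ : Measure Ω) [IsProbabilityMeasure μ]
    {n : ℕ} (X : ℝ → Ω → EuclideanSpace ℝ (Fin n))
    (hX : ∀ t, Measurable (X t))
    (ψ : ℝ → ℝ) (hψ0 : ∀ m, 0 ≤ ψ m)
    (Xm : ℝ → ℝ → Ω → EuclideanSpace ℝ (Fin n))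
    (hXm : ∀ m t, Measurable (Xm m t))
    (happrox : ∀ m, 0 ≤ m → ∀ t : ℝ,
      Integrable (fun ω => ‖X t ω - Xm m t ω‖) μ ∧
        (∫ ω, ‖X t ω - Xm m t ω‖ ∂μ) ≤ ψ m)
    (hindep : ∀ m, 0 ≤ m → ∀ (u v : ℕ), 0 < u → 0 < v →
      ∀ (i : Fin u → ℝ) (j : Fin v → ℝ), Monotone i → Monotone j →
        (∀ a b, i a + m ≤ j b) →
        IndepFun (fun ω (a : Fin u) => X (i a) ω)
          (fun ω (b : Fin v) => Xm m (j b) ω) μ) :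
    (∀ (u v : ℕ), 0 < u → 0 < v → ∀ r : ℝ, 0 ≤ r →
      ∀ (i : Fin u → ℝ) (j : Fin v → ℝ), Monotone i → Monotone j →
        (∀ a b, i a + r ≤ j b) →
        ∀ (F : (Fin u → EuclideanSpace ℝ (Fin n)) → ℝ)
          (G : (Fin v → EuclideanSpace ℝ (Fin n)) → ℝ) (LG : ℝ),
          Measurable F → Measurable G →
          (∀ x, |F x| ≤ 1) → (∀ x, |G x| ≤ 1) →
          Delta1Lip G LG →
          |cov μ (fun ω => F fun a => X (i a) ω) (fun ω => G fun b => X (j b) ω)| ≤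
            2 * (v : ℝ) * LG * ψ r) ∧
      (Tendsto ψ atTop (nhds 0) →
        ThetaWeaklyDependent μ X ψ 2) :=
  theta_weak_dependence_of_coupling_general μ X (fun t => (hX t).aemeasurable) ψ hψ0
    Xm (fun m t => (hXm m t).aemeasurable) happrox hindep

end
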